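/- arXiv:1307.2806 — 2 statements merged into one kernel-verified Lean document; each statement's English description precedes it below -/
import Mathlib

section
/- For the output sequence Π = (Π₁,…,Πₙ) of the algorithm Universal(𝓘): for every swap item Π_k with 1 < k ≤ n and every index j with 1 ≤ j < k, v(Π_j) ≥ v(Π_k), i.e., no item preceding a swap item in the output has smaller value. -/
/-!
Both kinds of insertion put an item `x` only in front of items of size at most `l x`, since the
items are processed in order of non-decreasing size.

* A swap item has value at least that of *every* item `y` with `l y ≤ l x`
  (`IsSwapItem.le_of_size_le`). Either `y` has density at most that of `x`, so that `v y ≤ v x` by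
  comparing sizes, or `y` precedes `x` in the density order; then `y` lies in the greedy prefix that
  `x` replaces, whose total value is less than `v x`.
* An item `x` that is not a swap item is inserted at the end or directly in front of an item `y`
  that does not precede it in the density order, so `v y ≤ v x`. Swap items behind `y` have value at most `v y`
  by induction.

Hence it is an invariant of the algorithm that no item in front of a swap item has smaller value.
-/

/-- The packing of a list of items (a universal policy) for capacity `C`:
scan the list in order, starting from the empty packing, and add an item
whenever its size fits into the remaining capacity. -/
def pack {α R : Type*} [LinearOrder R] [Sub R] (size : α → R) : R → List α → List α
  | _, [] => []
  | C, x :: xs => if size x ≤ C then x :: pack size (C - size x) xs else pack size C xs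

/-- The maximal prefix of a list of items fitting into capacity `C`. -/
def prefixPack {α R : Type*} [LinearOrder R] [Sub R] (size : α → R) : R → List α → List α
  | _, [] => []
  | C, x :: xs => if size x ≤ C then x :: prefixPack size (C - size x) xs else []

/-- The tie-broken density order: `DSucc v l t i j` means `d̃(i) ≻ d̃(j)`,
i.e. `v i / l i > v j / l j`, or the densities are equal and `t i > t j`. -/
def DSucc {n : ℕ} (v l : Fin n → ℚ) (t : Fin n → Fin n) (i j : Fin n) : Prop :=
  v j / l j < v i / l i ∨ (v i / l i = v j / l j ∧ t j < t i)

instance {n : ℕ} (v l : Fin n → ℚ) (t : Fin n → Fin n) (i j : Fin n) :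
    Decidable (DSucc v l t i j) := by unfold DSucc; exact inferInstance

/-- `D` is the list of all items of size at most `C`, sorted strictly
decreasingly with respect to the tie-broken density order `d̃`. -/
def IsDensityList {n : ℕ} (v l : Fin n → ℚ) (t : Fin n → Fin n) (C : ℚ)
    (D : List (Fin n)) : Prop :=
  D.Nodup ∧ (∀ i, i ∈ D ↔ l i ≤ C) ∧ D.Pairwise (DSucc v l t)

/-- `i` is a swap item for capacity `C`: on the density-sorted list `D` of all
items of size at most `C`, the modified greedy algorithm finds `i` as the first
item after its maximal fitting prefix `P`, and `v i > v(P)`, so `MGreedy`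
returns `{i}`. -/
def SwapFor {n : ℕ} (v l : Fin n → ℚ) (t : Fin n → Fin n) (i : Fin n) (C : ℚ) : Prop :=
  ∃ D : List (Fin n), IsDensityList v l t C D ∧
    D[(prefixPack l C D).length]? = some i ∧
    ((prefixPack l C D).map v).sum < v i

/-- `i` is a swap item if it is a swap item for some capacity. -/
def IsSwapItem {n : ℕ} (v l : Fin n → ℚ) (t : Fin n → Fin n) (i : Fin n) : Prop :=
  ∃ C : ℚ, SwapFor v l t i C

/-- Insert `x` into a list immediately after the maximal prefix of elements
satisfying `p`. -/
def insertAfter {α : Type*} (p : α → Prop) [DecidablePred p] (x : α) : List α → List α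
  | [] => [x]
  | y :: ys => if p y then y :: insertAfter p x ys else x :: y :: ys

open Classical in
/-- The algorithm `Universal`: process the items in the order given by `L`
(non-decreasing sizes), starting from the empty sequence; a swap item is
inserted at the front of the current sequence, any other item `x` is inserted
immediately after the maximal prefix of items `y` with `d̃(y) ≻ d̃(x)`. -/
noncomputable def universalAlg {n : ℕ} (v l : Fin n → ℚ) (t : Fin n → Fin n)
    (L : List (Fin n)) : List (Fin n) :=
  L.foldl (fun acc x =>
    if IsSwapItem v l t x then x :: acc
    else insertAfter (fun y => DSucc v l t y x) x acc) []

theorem prefixPack_prefix {α R : Type*} [LinearOrder R] [Sub R] (size : α → R) (C : R)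
    (D : List α) : prefixPack size C D <+: D := by
  induction D generalizing C with
  | nil => simp [prefixPack]
  | cons x xs ih =>
    unfold prefixPack
    split_ifs
    · exact List.cons_prefix_cons.2 ⟨rfl, ih _⟩
    · exact List.nil_prefix

theorem mem_insertAfter {α : Type*} {p : α → Prop} [DecidablePred p] {x a : α} {ys : List α} :
    a ∈ insertAfter p x ys ↔ a = x ∨ a ∈ ys := by
  induction ys with
  | nil => simp [insertAfter]
  | cons y ys ih =>
    unfold insertAfter
    split_ifs
    · simp only [List.mem_cons, ih]
      tauto
    · simp

theorem value_le_of_density_le {n : ℕ} {v l : Fin n → ℚ} (hv : ∀ i, 0 ≤ v i)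
    (hl : ∀ i, 0 < l i) {x y : Fin n} (hd : v y / l y ≤ v x / l x) (hs : l y ≤ l x) :
    v y ≤ v x := by
  calc v y = v y / l y * l y := (div_mul_cancel₀ _ (hl y).ne').symm
    _ ≤ v x / l x * l x := mul_le_mul hd hs (hl y).le (div_nonneg (hv x) (hl x).le)
    _ = v x := div_mul_cancel₀ _ (hl x).ne'

/-- A swap item is at least as valuable as every item that is not larger. -/
theorem IsSwapItem.le_of_size_le {n : ℕ} {v l : Fin n → ℚ} (hv : ∀ i, 0 ≤ v i)
    (hl : ∀ i, 0 < l i) {t : Fin n → Fin n} {x y : Fin n} (hx : IsSwapItem v l t x)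
    (hs : l y ≤ l x) : v y ≤ v x := by
  obtain ⟨C, D, ⟨-, hmem, hpair⟩, hget, hsum⟩ := hx
  rcases le_or_gt (v y / l y) (v x / l x) with hd | hd
  · exact value_le_of_density_le hv hl hd hs
  have hyD : y ∈ D := (hmem y).2 (hs.trans ((hmem x).1 (List.mem_of_getElem? hget)))
  obtain ⟨Q, hQ⟩ := prefixPack_prefix l C D
  set P := prefixPack l C D with hP
  rw [← hQ] at hget hyD hpair
  obtain ⟨Q', rfl⟩ : ∃ Q', Q = x :: Q' := by
    cases Q with
    | nil => simp at hget
    | cons z Q' => exact ⟨Q', by simpa using hget⟩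
  have hyP : y ∈ P := by
    rcases List.mem_append.1 hyD with h | h
    · exact h
    exfalso
    rcases List.mem_cons.1 h with rfl | h
    · exact hd.false
    rcases List.rel_of_pairwise_cons (List.pairwise_append.1 hpair).2.1 h with h | h
    · exact hd.not_gt h
    · exact hd.ne h.1
  have hle : v y ≤ (P.map v).sum := by
    refine List.single_le_sum ?_ _ (List.mem_map_of_mem hyP)
    simp only [List.mem_map]
    rintro _ ⟨i, -, rfl⟩
    exact hv i
  exact hle.trans hsum.le

/-- Inserting a non-swap item of maximal size by density keeps every swap item at most as
valuable as all items in front of it. -/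
theorem pairwise_insertAfter {n : ℕ} {v l : Fin n → ℚ} (hv : ∀ i, 0 ≤ v i)
    (hl : ∀ i, 0 < l i) {t : Fin n → Fin n} {x : Fin n} (hx : ¬ IsSwapItem v l t x)
    {acc : List (Fin n)} (hacc : acc.Pairwise fun a b => IsSwapItem v l t b → v b ≤ v a)
    (hs : ∀ a ∈ acc, l a ≤ l x) :
    (insertAfter (fun y => DSucc v l t y x) x acc).Pairwise
      fun a b => IsSwapItem v l t b → v b ≤ v a := by
  induction acc with
  | nil => simp [insertAfter]
  | cons y ys ih =>
    obtain ⟨hy, hys⟩ := List.pairwise_cons.1 hacc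
    unfold insertAfter
    split_ifs with hp
    · refine List.pairwise_cons.2 ⟨fun a ha => ?_,
        ih hys fun a ha => hs a (List.mem_cons_of_mem _ ha)⟩
      rcases mem_insertAfter.1 ha with rfl | ha
      · exact fun h => absurd h hx
      · exact hy a ha
    · have hyx : v y ≤ v x :=
        value_le_of_density_le hv hl (not_lt.1 fun h => hp (Or.inl h)) (hs y (by simp))
      refine List.pairwise_cons.2 ⟨fun a ha hsw => ?_, hacc⟩
      rcases List.mem_cons.1 ha with rfl | ha
      · exact hyx
      · exact (hy a ha hsw).trans hyx

open Classical in
/-- The invariant of `Universal`: no item of smaller value stands in front of a swap item. The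
sequence `acc` is generalized for the induction, which also needs that no item of `acc` is larger
than an item still to be processed. -/
theorem pairwise_foldl {n : ℕ} {v l : Fin n → ℚ} (hv : ∀ i, 0 ≤ v i)
    (hl : ∀ i, 0 < l i) {t : Fin n → Fin n} (L : List (Fin n))
    (hL : L.Pairwise fun a b => l a ≤ l b) (acc : List (Fin n))
    (hacc : acc.Pairwise fun a b => IsSwapItem v l t b → v b ≤ v a)
    (hs : ∀ a ∈ acc, ∀ x ∈ L, l a ≤ l x) :
    (L.foldl (fun acc x =>
      if IsSwapItem v l t x then x :: acc
      else insertAfter (fun y => DSucc v l t y x) x acc) acc).Pairwise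
      fun a b => IsSwapItem v l t b → v b ≤ v a := by
  induction L generalizing acc with
  | nil => exact hacc
  | cons x L ih =>
    obtain ⟨hxL, hL'⟩ := List.pairwise_cons.1 hL
    have hsx : ∀ a ∈ acc, l a ≤ l x := fun a ha => hs a ha x (by simp)
    have hsL : ∀ a, a = x ∨ a ∈ acc → ∀ z ∈ L, l a ≤ l z := by
      rintro a (rfl | ha) z hz
      · exact hxL z hz
      · exact hs a ha z (List.mem_cons_of_mem _ hz)
    rw [List.foldl_cons]
    split_ifs with hx
    · exact ih hL' _
        (List.pairwise_cons.2 ⟨fun a ha _ => hx.le_of_size_le hv hl (hsx a ha), hacc⟩)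
        fun a ha => hsL a (List.mem_cons.1 ha)
    · exact ih hL' _ (pairwise_insertAfter hv hl hx hacc hsx)
        fun a ha => hsL a (mem_insertAfter.1 ha)

/-- In the output sequence `P` of `Universal(𝓘)`, no item
preceding a swap item has smaller value: if `P k` is a swap item and `j < k`,
then `v(P j) ≥ v(P k)`. -/
theorem universal_values {n : ℕ} (v l : Fin n → ℚ)
    (hv : ∀ i, 0 ≤ v i) (hl : ∀ i, 0 < l i)
    (t : Fin n → Fin n) (ht : Function.Bijective t)
    (L : List (Fin n)) (hLnd : L.Nodup) (hLall : ∀ i, i ∈ L)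
    (hLsorted : L.Pairwise fun a b => l a ≤ l b)
    (P : List (Fin n)) (hP : P = universalAlg v l t L)
    (k : ℕ) (hk : k < P.length) (hswap : IsSwapItem v l t (P[k]'hk))
    (j : ℕ) (hj : j < k) :
    v (P[k]'hk) ≤ v (P[j]'(by omega)) := by
  subst hP
  exact List.pairwise_iff_getElem.1 (pairwise_foldl hv hl L hLsorted [] List.Pairwise.nil (by simp))
    j k (hj.trans hk) hk hj hswap
end

section
/- Let k ≥ 3 be an integer, T = 2^k, and let W = {w₁,…,wₙ} be positive integers with 2 ≤ w < T/2 for all w ∈ W and w₁ ≤ … ≤ wₙ. Let α ∈ ℚ with α > T/(T−1), and set ε = (α(T−1)−T)/(α(T−1)−1), so ε ∈ (0,1) and α = (T−ε)/((1−ε)(T−1)). Build the instance 𝓘: for each w ∈ W a regular item i_w with l(i_w) = v(i_w) = w; for each k' ∈ {0,…,m}, where m = log₂T − 1, an auxiliary item j_{k'} with l(j_{k'}) = 2^{k'} and v(j_{k'}) = 2^{k'}(1−ε); and a dummy item d with l(d) = T+1 and v(d) = ((1−ε)/ε)·((T−1)(1−ε) + Σ_{w∈W} w). Let Π be the universal policy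 (d, j_m, j_{m−1}, …, j_0, i_{wₙ}, i_{w_{n−1}}, …, i_{w₁}). Then Π is α-robust if and only if no subset of W sums to T. -/
theorem pack_sublist {α R : Type*} [LinearOrder R] [Sub R] (size : α → R) (l : List α) (C : R) :
    (pack size C l).Sublist l := by
  induction l generalizing C with
  | nil => simp [pack]
  | cons x xs ih =>
    simp only [pack]
    split_ifs
    · exact (ih _).cons_cons x
    · exact (ih _).cons x

theorem pack_append {α : Type*} (size : α → ℚ) (l₁ l₂ : List α) (C : ℚ) :
    pack size C (l₁ ++ l₂) =
      pack size C l₁ ++ pack size (C - ((pack size C l₁).map size).sum) l₂ := by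
  induction l₁ generalizing C with
  | nil => simp [pack]
  | cons x xs ih =>
    simp only [List.cons_append, pack]
    split_ifs
    · rw [ih]; simp [sub_sub]
    · rw [ih]

theorem pack_eq_nil {α R : Type*} [LinearOrder R] [Sub R] (size : α → R) (l : List α) (C : R)
    (h : ∀ x ∈ l, C < size x) : pack size C l = [] := by
  induction l with
  | nil => simp [pack]
  | cons x xs ih =>
    simp only [pack]
    rw [if_neg (not_le.2 (h x (by simp))), ih fun y hy => h y (by simp [hy])]

/-- Greedily packing the sizes `2^(k-1), …, 2, 1` into capacity `C` reproduces the binary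
expansion of `min ⌊C⌋ (2^k - 1)`: the packed size `n` is the integer part of `C`, unless all items
are packed. -/
theorem pack_two_pow {α : Type*} (size : α → ℚ) (k : ℕ) (l : List α) (C : ℚ) (hC : 0 ≤ C)
    (hl : l.map size = (List.range k).reverse.map fun j => (2 : ℚ) ^ j) :
    ∃ n : ℕ, ((pack size C l).map size).sum = n ∧ (n : ℚ) ≤ C ∧ n + 1 ≤ 2 ^ k ∧
      (C < n + 1 ∨ n + 1 = 2 ^ k) := by
  induction k generalizing l C with
  | zero =>
    obtain rfl : l = [] := by simpa using hl
    exact ⟨0, by simp [pack, hC]⟩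
  | succ k ih =>
    cases l with
    | nil => simp [List.range_succ] at hl
    | cons x xs =>
      simp only [List.range_succ, List.reverse_append, List.reverse_cons, List.reverse_nil,
        List.nil_append, List.cons_append, List.map_cons, List.cons.injEq] at hl
      obtain ⟨hx, hxs⟩ := hl
      simp only [pack]
      split_ifs with h
      · obtain ⟨n, h1, h2, h3, h4⟩ := ih xs (C - size x) (by linarith) hxs
        rw [hx] at h1 h2 h4
        refine ⟨2 ^ k + n, ?_, ?_, ?_, ?_⟩
        · rw [List.map_cons, List.sum_cons, hx, h1]; push_cast; ring
        · push_cast; linarith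
        · rw [pow_succ]; omega
        · rcases h4 with h4 | h4
          · left; push_cast; linarith
          · right; rw [pow_succ]; omega
      · obtain ⟨n, h1, h2, h3, h4⟩ := ih xs C hC hxs
        refine ⟨n, h1, h2, by rw [pow_succ]; omega, Or.inl ?_⟩
        rcases h4 with h4 | h4
        · exact h4
        · have h5 : (n : ℚ) + 1 = 2 ^ k := by exact_mod_cast h4
          rw [hx] at h
          linarith

/-- The two facts about `α` and `ε` on which robustness turns: `α` times the total auxiliary value
is `T - ε`, and packing a `1 - ε` fraction of the optimum is good enough. -/
theorem eps_facts {T α ε : ℚ} (hT : 1 < T) (hα : T / (T - 1) < α)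
    (hε : ε = (α * (T - 1) - T) / (α * (T - 1) - 1)) :
    0 < ε ∧ ε < 1 ∧ α * ((1 - ε) * (T - 1)) = T - ε ∧ 1 ≤ α * (1 - ε) := by
  have hT' : 0 < T - 1 := by linarith
  have ha : T < α * (T - 1) := (div_lt_iff₀ hT').1 hα
  have hd : 0 < α * (T - 1) - 1 := by linarith
  have h0 : 0 < ε := by rw [hε]; exact div_pos (by linarith) hd
  have h1 : ε < 1 := by rw [hε, div_lt_one hd]; linarith
  have h2 : α * ((1 - ε) * (T - 1)) = T - ε := by
    have : ε * (α * (T - 1) - 1) = α * (T - 1) - T := by rw [hε]; field_simp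
    linarith
  refine ⟨h0, h1, h2, ?_⟩
  by_contra! hlt
  nlinarith [mul_lt_mul_of_pos_right hlt hT']

/-- The hardness construction: `T = 2^k` with `k ≥ 3`, weights
`w₁ ≤ … ≤ wₙ` in `[2, T/2)`, `α > T/(T−1)`, `ε = (α(T−1)−T)/(α(T−1)−1)`.  The
instance consists of regular items `i_w` (value = size = `w`), auxiliary items
`j_{k'}` (`k' ∈ {0,…,m}`, `m = log₂T − 1 = k−1`) of size `2^{k'}` and value
`2^{k'}(1−ε)`, and a dummy item of size `T+1` and value
`((1−ε)/ε)((T−1)(1−ε)+Σw)`.  The universal policy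
`Π = (d, j_m, …, j_0, i_{wₙ}, …, i_{w₁})` is `α`-robust if and only if no
subset of `W` sums to `T`.  Regular items are `Sum.inl i`, auxiliary items
`Sum.inr (Sum.inl j)`, the dummy item is `Sum.inr (Sum.inr ())`. -/
theorem hardness_policy_robust_iff_no_subset_sum (k nn : ℕ) (hk : 3 ≤ k)
    (w : Fin nn → ℕ) (hw2 : ∀ i, 2 ≤ w i) (hwT : ∀ i, 2 * w i < 2 ^ k)
    (hwmono : Monotone w)
    (α ε : ℚ) (hα : (2 ^ k : ℚ) / ((2 ^ k : ℚ) - 1) < α)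
    (hε : ε = (α * ((2 ^ k : ℚ) - 1) - 2 ^ k) / (α * ((2 ^ k : ℚ) - 1) - 1))
    (V Lsz : (Fin nn ⊕ Fin k ⊕ Unit) → ℚ)
    (hV : V = Sum.elim (fun i => (w i : ℚ))
      (Sum.elim (fun j : Fin k => (2 : ℚ) ^ (j : ℕ) * (1 - ε))
        (fun _ => ((1 - ε) / ε) * (((2 ^ k : ℚ) - 1) * (1 - ε) + ∑ i, (w i : ℚ)))))
    (hL : Lsz = Sum.elim (fun i => (w i : ℚ))
      (Sum.elim (fun j : Fin k => (2 : ℚ) ^ (j : ℕ))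
        (fun _ => (2 ^ k : ℚ) + 1)))
    (P : List (Fin nn ⊕ Fin k ⊕ Unit))
    (hP : P = Sum.inr (Sum.inr ()) ::
      (((List.finRange k).reverse.map (fun j => Sum.inr (Sum.inl j))) ++
        ((List.finRange nn).reverse.map Sum.inl))) :
    (∀ C : ℚ, 0 ≤ C → C ≤ ∑ i, Lsz i →
        ∀ S : Finset (Fin nn ⊕ Fin k ⊕ Unit), ∑ i ∈ S, Lsz i ≤ C →
          ∑ i ∈ S, V i ≤ α * ((pack Lsz C P).map V).sum) ↔
      ¬ ∃ S : Finset (Fin nn), ∑ i ∈ S, w i = 2 ^ k := by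
  set T : ℚ := 2 ^ k with hTdef
  have hT8 : (8 : ℚ) ≤ T := by
    calc (8 : ℚ) = 2 ^ 3 := by norm_num
      _ ≤ 2 ^ k := pow_le_pow_right₀ (by norm_num) hk
  obtain ⟨hε0, hε1, hαT, hα1⟩ := eps_facts (by linarith) hα hε
  have hα0 : 0 < α := lt_trans (div_pos (by linarith) (by linarith)) hα
  have hVl (i : Fin nn) : V (Sum.inl i) = w i := by simp [hV]
  have hVm (j : Fin k) : V (Sum.inr (Sum.inl j)) = 2 ^ (j : ℕ) * (1 - ε) := by simp [hV]
  have hVr : V (Sum.inr (Sum.inr ())) = (1 - ε) / ε * ((T - 1) * (1 - ε) + ∑ i, (w i : ℚ)) := by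
    simp [hV]
  have hLl (i : Fin nn) : Lsz (Sum.inl i) = w i := by simp [hL]
  have hLm (j : Fin k) : Lsz (Sum.inr (Sum.inl j)) = 2 ^ (j : ℕ) := by simp [hL]
  have hLr : Lsz (Sum.inr (Sum.inr ())) = T + 1 := by simp [hL]
  clear hV hL
  have hX : 0 ≤ (T - 1) * (1 - ε) + ∑ i, (w i : ℚ) :=
    add_nonneg (mul_nonneg (by linarith) (by linarith)) (Finset.sum_nonneg fun i _ => by positivity)
  have hV0 : ∀ i, 0 ≤ V i := by
    rintro (i | j | ⟨⟩)
    · rw [hVl]; positivity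
    · rw [hVm]; exact mul_nonneg (by positivity) (by linarith)
    · rw [hVr]; exact mul_nonneg (div_nonneg (by linarith) hε0.le) hX
  have hL0 : ∀ i, 0 ≤ Lsz i := by
    rintro (i | j | ⟨⟩)
    · rw [hLl]; positivity
    · rw [hLm]; positivity
    · rw [hLr]; linarith
  have hLnat : ∀ i, ∃ m : ℕ, Lsz i = m := by
    rintro (i | j | ⟨⟩)
    · exact ⟨_, hLl i⟩
    · exact ⟨2 ^ (j : ℕ), by rw [hLm]; simp⟩
    · exact ⟨2 ^ k + 1, by rw [hLr]; simp [hTdef]⟩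
  choose ℓ hℓ using hLnat
  have hlist0 (l : List (Fin nn ⊕ Fin k ⊕ Unit)) : 0 ≤ (l.map V).sum :=
    List.sum_nonneg fun x hx => by
      obtain ⟨y, -, rfl⟩ := List.mem_map.1 hx
      exact hV0 y
  set A : List (Fin nn ⊕ Fin k ⊕ Unit) :=
    (List.finRange k).reverse.map (fun j => Sum.inr (Sum.inl j)) with hA
  set B : List (Fin nn ⊕ Fin k ⊕ Unit) := (List.finRange nn).reverse.map Sum.inl with hB
  have hAsize : A.map Lsz = (List.range k).reverse.map fun j => (2 : ℚ) ^ j := by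
    rw [hA, List.map_map, ← List.map_coe_finRange_eq_range, ← List.map_reverse, List.map_map]
    exact List.map_congr_left fun j _ => hLm j
  have hAval (C : ℚ) : ((pack Lsz C A).map V).sum = (1 - ε) * ((pack Lsz C A).map Lsz).sum := by
    rw [← List.sum_map_mul_left]
    congr 1
    refine List.map_congr_left fun x hx => ?_
    have hxA := (pack_sublist Lsz A C).subset hx
    rw [hA] at hxA
    obtain ⟨j, -, rfl⟩ := List.mem_map.1 hxA
    rw [hVm, hLm, mul_comm]
  have hpack (C : ℚ) (hC : C < T + 1) : pack Lsz C P =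
      pack Lsz C A ++ pack Lsz (C - ((pack Lsz C A).map Lsz).sum) B := by
    rw [hP, pack, if_neg (by rw [hLr]; linarith), pack_append]
  constructor
  · rintro hrob ⟨S, hS⟩
    have hS' : ∑ i ∈ S, (w i : ℚ) = T := by rw [hTdef]; exact_mod_cast hS
    have hTle : T ≤ ∑ i, Lsz i := by
      have := Finset.single_le_sum (fun i _ => hL0 i)
        (Finset.mem_univ (Sum.inr (Sum.inr ()) : Fin nn ⊕ Fin k ⊕ Unit))
      linarith
    have h := hrob T (by linarith) hTle (S.map Function.Embedding.inl)
      (by simp [hLl, hS'])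
    obtain ⟨n, h1, h2, h3, h4⟩ := pack_two_pow Lsz k A T (by linarith) hAsize
    have hn : (n : ℚ) = T - 1 := by
      have h3' : (n : ℚ) + 1 ≤ T := by rw [hTdef]; exact_mod_cast h3
      rcases h4 with h4 | h4
      · linarith
      · have : (n : ℚ) + 1 = T := by rw [hTdef]; exact_mod_cast h4
        linarith
    -- One unit of capacity is left after the auxiliary items: too little for a regular item.
    have hBnil : pack Lsz (T - ((pack Lsz T A).map Lsz).sum) B = [] := by
      refine pack_eq_nil _ _ _ fun x hx => ?_
      rw [hB] at hx
      obtain ⟨i, -, rfl⟩ := List.mem_map.1 hx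
      have : (2 : ℚ) ≤ w i := by exact_mod_cast hw2 i
      rw [h1, hn, hLl]
      linarith
    rw [hpack T (by linarith), hBnil, List.append_nil, hAval, h1, hn, hαT] at h
    simp only [Finset.sum_map, Function.Embedding.inl_apply, hVl, hS'] at h
    linarith
  · intro hno C hC0 _ S hSC
    rcases le_or_gt (T + 1) C with hC | hC
    · have hpol : V (Sum.inr (Sum.inr ())) ≤ ((pack Lsz C P).map V).sum := by
        rw [hP, pack, if_pos (by rw [hLr]; exact hC), List.map_cons, List.sum_cons]
        exact le_add_of_nonneg_right (hlist0 _)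
      have hgeom : ∑ j : Fin k, (2 : ℚ) ^ (j : ℕ) = T - 1 := by
        rw [Fin.sum_univ_eq_sum_range (fun j => (2 : ℚ) ^ j), geom_sum_eq (by norm_num)]
        norm_num [hTdef]
      -- The dummy item is worth a `1 - ε` fraction of the whole instance.
      have hall : (1 - ε) * ∑ i, V i = V (Sum.inr (Sum.inr ())) := by
        rw [Fintype.sum_sum_type, Fintype.sum_sum_type]
        simp only [hVl, hVm, Finset.univ_unique, Finset.sum_singleton, PUnit.default_eq_unit, hVr,
          ← Finset.sum_mul, hgeom]
        field_simp
        ring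
      calc ∑ i ∈ S, V i ≤ ∑ i, V i :=
            Finset.sum_le_sum_of_subset_of_nonneg (Finset.subset_univ S) fun i _ _ => hV0 i
        _ ≤ α * (1 - ε) * ∑ i, V i :=
            le_mul_of_one_le_left (Finset.sum_nonneg fun i _ => hV0 i) hα1
        _ = α * V (Sum.inr (Sum.inr ())) := by rw [mul_assoc, hall]
        _ ≤ _ := mul_le_mul_of_nonneg_left hpol hα0.le
    · have hdum : Sum.inr (Sum.inr ()) ∉ S := fun hd => by
        have := Finset.single_le_sum (fun i _ => hL0 i) hd
        linarith
      have hVL : ∀ i ∈ S, V i ≤ Lsz i := by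
        rintro (i | j | ⟨⟩) hi
        · rw [hVl, hLl]
        · rw [hVm, hLm]
          exact mul_le_of_le_one_right (by positivity) (by linarith)
        · exact absurd hi hdum
      have hsum : ∑ i ∈ S, V i ≤ ∑ i ∈ S, Lsz i := Finset.sum_le_sum hVL
      have hSnat : ∑ i ∈ S, Lsz i = ((∑ i ∈ S, ℓ i : ℕ) : ℚ) := by
        push_cast; exact Finset.sum_congr rfl fun i _ => hℓ i
      obtain ⟨n, h1, h2, h3, h4⟩ := pack_two_pow Lsz k A C hC0 hAsize
      have hpol : α * ((1 - ε) * n) ≤ α * ((pack Lsz C P).map V).sum := by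
        rw [hpack C hC, List.map_append, List.sum_append, hAval, h1]
        exact mul_le_mul_of_nonneg_left (le_add_of_nonneg_right (hlist0 _)) hα0.le
      refine le_trans ?_ hpol
      rw [hSnat] at hsum hSC
      rcases le_or_gt (∑ i ∈ S, ℓ i) n with hle | hgt
      · have hle' : ((∑ i ∈ S, ℓ i : ℕ) : ℚ) ≤ n := by exact_mod_cast hle
        have := le_mul_of_one_le_left (Nat.cast_nonneg (α := ℚ) n) hα1
        linarith
      · -- More than the packed auxiliary size is feasible only if all auxiliary items are
        -- packed, and then the feasible set has size exactly `T`.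
        have hgt' : (n : ℚ) + 1 ≤ ((∑ i ∈ S, ℓ i : ℕ) : ℚ) := by exact_mod_cast hgt
        have hn : n + 1 = 2 ^ k := h4.resolve_left (by linarith)
        have hn' : (n : ℚ) + 1 = T := by rw [hTdef]; exact_mod_cast hn
        have hlt : ((∑ i ∈ S, ℓ i : ℕ) : ℚ) < ((2 ^ k + 1 : ℕ) : ℚ) := by
          push_cast at hSC ⊢; linarith
        have hST : ∑ i ∈ S, ℓ i = 2 ^ k := by
          have := Nat.cast_lt.1 hlt
          omega
        have hST' : ∑ i ∈ S, Lsz i = T := by rw [hSnat, hST, hTdef]; simp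
        rw [show (n : ℚ) = T - 1 by linarith, hαT]
        by_cases haux : ∃ j, Sum.inr (Sum.inl j) ∈ S
        · obtain ⟨j, hj⟩ := haux
          have hloss := Finset.single_le_sum (f := fun i => Lsz i - V i)
            (fun i hi => sub_nonneg.2 (hVL i hi)) hj
          simp only [Finset.sum_sub_distrib, hST', hLm, hVm] at hloss
          have hone : (1 : ℚ) ≤ 2 ^ (j : ℕ) := one_le_pow₀ (by norm_num)
          nlinarith
        · refine absurd ⟨S.toLeft, ?_⟩ hno
          have hSmap : S = S.toLeft.map Function.Embedding.inl := by
            ext x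
            rcases x with i | j | ⟨⟩
            · simp
            · simpa using fun h => haux ⟨j, h⟩
            · simpa using hdum
          rw [hSmap, Finset.sum_map] at hST'
          simp only [Function.Embedding.inl_apply, hLl] at hST'
          rw [hTdef] at hST'
          exact_mod_cast hST'
end
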